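/- Let (h_r)_{r \ge r_0} be a non-decreasing sequence of positive real numbers and let \tau < 2 and (e_r) be a sequence of real numbers with e_r = o(h_{r+1}) as r \to \infty. Suppose h_r \le (\tau/2) h_{r+1} + e_r for all r \ge r_0. Then for every F with 1 < F < 2/\tau there exist a constant D > 0 and an integer r_1 such that h_r \ge D\,F^r for all r \ge r_1; in particular h_r grows exponentially in r. -/

import Mathlib

/-!
The error `e r` is eventually smaller than any fixed positive multiple of `h (r + 1)`, so the
slack between `τ / 2` and `1 / F` absorbs it: eventually `F * h r ≤ h (r + 1)`. From then on
`h r / F ^ r` is non-decreasing, so it stays above its first value.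
-/

open Filter Topology

section OrderedField

variable {K : Type*} [Field K] [LinearOrder K] [IsStrictOrderedRing K]

theorem eventually_le_mul_of_le_mul_add [TopologicalSpace K] [ClosedIciTopology K]
    {ι : Type*} {l : Filter ι} {u v e : ι → K} {a b : K} (hab : a < b)
    (hv : ∀ᶠ i in l, 0 < v i) (he : Tendsto (fun i => e i / v i) l (𝓝 0))
    (huv : ∀ᶠ i in l, u i ≤ a * v i + e i) : ∀ᶠ i in l, u i ≤ b * v i := by
  filter_upwards [hv, he.eventually_lt_const (sub_pos.2 hab), huv] with i hvi hei hui
  calc u i ≤ a * v i + e i := hui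
    _ ≤ a * v i + (b - a) * v i := by gcongr; exact ((div_lt_iff₀ hvi).1 hei).le
    _ = b * v i := by ring

theorem exists_pos_eventually_mul_pow_le {c : K} (hc : 0 < c) {u : ℕ → K}
    (hpos : ∀ᶠ n in atTop, 0 < u n) (hu : ∀ᶠ n in atTop, c * u n ≤ u (n + 1)) :
    ∃ D > 0, ∀ᶠ n in atTop, D * c ^ n ≤ u n := by
  obtain ⟨N, hN⟩ := eventually_atTop.1 (hpos.and hu)
  have ratio_mono : MonotoneOn (fun n => u n / c ^ n) (Set.Ici N) := by
    refine monotoneOn_nat_Ici_of_le_succ fun n hn => ?_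
    rw [pow_succ', div_le_div_iff₀ (by positivity) (by positivity)]
    calc u n * (c * c ^ n) = c * u n * c ^ n := by ring
      _ ≤ u (n + 1) * c ^ n := by gcongr; exact (hN n hn).2
  refine ⟨u N / c ^ N, div_pos (hN N le_rfl).1 (pow_pos hc N), ?_⟩
  filter_upwards [eventually_ge_atTop N] with n hn
  exact (le_div_iff₀ (pow_pos hc n)).1 (ratio_mono Set.self_mem_Ici hn hn)

theorem exponential_growth_of_height_general [TopologicalSpace K] [ClosedIciTopology K]
    {h e : ℕ → K} {τ F : K} (hpos : ∀ᶠ r in atTop, 0 < h r)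
    (he : Tendsto (fun r => e r / h (r + 1)) atTop (𝓝 0))
    (hineq : ∀ᶠ r in atTop, h r ≤ τ / 2 * h (r + 1) + e r) (hF : 0 < F) (hFτ : F * τ < 2) :
    ∃ D > 0, ∀ᶠ r in atTop, D * F ^ r ≤ h r := by
  have slack : τ / 2 < F⁻¹ := by
    rw [div_lt_iff₀ two_pos]
    exact (lt_inv_mul_iff₀ hF).2 hFτ
  have contraction : ∀ᶠ r in atTop, h r ≤ F⁻¹ * h (r + 1) :=
    eventually_le_mul_of_le_mul_add slack ((tendsto_add_atTop_nat 1).eventually hpos) he hineq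
  exact exists_pos_eventually_mul_pow_le hF hpos
    (contraction.mono fun _ hr => (le_inv_mul_iff₀ hF).1 hr)

end OrderedField

/-- if a non-decreasing positive sequence satisfies
`h_r ≤ (τ/2) h_{r+1} + e_r` with `τ < 2` and `e_r = o(h_{r+1})`, then `h_r` grows
at least like `F^r` for every `1 < F < 2/τ`. -/
theorem exponential_growth_of_height
    (r0 : ℕ) (h : ℕ → ℝ)
    (hpos : ∀ r, r0 ≤ r → 0 < h r)
    (hmono : ∀ r, r0 ≤ r → h r ≤ h (r + 1))
    (τ : ℝ) (hτ : τ < 2) (e : ℕ → ℝ)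
    (he : Filter.Tendsto (fun r : ℕ => e r / h (r + 1)) Filter.atTop (nhds 0))
    (hineq : ∀ r, r0 ≤ r → h r ≤ τ / 2 * h (r + 1) + e r) :
    ∀ F : ℝ, 1 < F → F < 2 / τ →
      ∃ D : ℝ, 0 < D ∧ ∃ r1 : ℕ, ∀ r, r1 ≤ r → D * F ^ r ≤ h r := by
  intro F hF hFτ
  have hτ0 : 0 < τ := (div_pos_iff_of_pos_left two_pos).1 (one_pos.trans (hF.trans hFτ))
  simpa only [eventually_atTop] using exponential_growth_of_height_general
    (eventually_atTop.2 ⟨r0, hpos⟩) he (eventually_atTop.2 ⟨r0, hineq⟩)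
    (one_pos.trans hF) ((lt_div_iff₀ hτ0).1 hFτ)
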